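/- arXiv:0902.1502 — 2 statements merged into one kernel-verified Lean document; each statement's English description precedes it below -/
import Mathlib

section
/- A 4×4 real symmetric matrix V satisfies V + iΩ ≥ 0 if and only if V > 0, det V ≥ 1, and Δ(V) ≤ 1 + det V, where Δ(V) = det A + det B + 2 det C for the 2×2 block decomposition V = [[A,C],[C^T,B]]. -/
open Matrix
open scoped ComplexOrder

def omega2 : Matrix (Fin 2) (Fin 2) ℝ := !![0, 1; -1, 0]

/-- The two-mode symplectic form Ω = ω ⊕ ω, in block form. -/
def Omega2mode : Matrix (Fin 2 ⊕ Fin 2) (Fin 2 ⊕ Fin 2) ℝ :=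
  Matrix.fromBlocks omega2 0 0 omega2

noncomputable def cplx {ι : Type*} (M : Matrix ι ι ℝ) : Matrix ι ι ℂ :=
  M.map Complex.ofReal

/-!
A real symmetric `V` with `V ± iΩ ≥ 0` is positive definite because `Ω` is invertible, and the two
signs are exchanged by transposition. For positive definite `V`, diagonalize `V` and `iΩ`
simultaneously by a congruence, with real relative eigenvalues `d i` (these are `±1/ν₊` and `±1/ν₋`
for the symplectic eigenvalues `ν₊`, `ν₋` of `V`); then `V + iΩ ≥ 0` says that `-1 ≤ d i` for all
`i`, and `det V * ∏ i, (t + d i) = det (t V + iΩ) = t⁴ det V - t² Δ(V) + 1`. At `t = 0` this gives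
`det V ≥ 1` since `|d i| ≤ 1`, and at `t = 1` it gives `Δ(V) ≤ 1 + det V`. Conversely, `d i < -1`
makes `-d i > 1` a root of the quartic, which is at least `(t² - 1) (t² det V - 1) > 0` for `t > 1`.
-/

section RelativeEigenvalues

variable {𝕜 n : Type*} [RCLike 𝕜] [Fintype n] [DecidableEq n]

open scoped MatrixOrder Matrix.Norms.L2Operator in
theorem posDef_iff_exists_isUnit_conjTranspose_mul_self {W : Matrix n n 𝕜} :
    W.PosDef ↔ ∃ P : Matrix n n 𝕜, IsUnit P ∧ W = Pᴴ * P :=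
  isStrictlyPositive_iff_posDef.symm.trans CStarAlgebra.isStrictlyPositive_iff_eq_star_mul_self

/-- `d` lists the eigenvalues of the Hermitian form `J` relative to the positive definite form `W`,
that is, the roots with multiplicity of `det (x • W - J)`, encoded by a congruence `P` which
simultaneously takes `W` to the identity and `J` to `diagonal d`. -/
def IsRelativeEigenvalues (W J : Matrix n n 𝕜) (d : n → ℝ) : Prop :=
  ∃ P : Matrix n n 𝕜, IsUnit P ∧ W = Pᴴ * P ∧ J = Pᴴ * diagonal (fun i ↦ (d i : 𝕜)) * P

theorem exists_isRelativeEigenvalues {W J : Matrix n n 𝕜} (hW : W.PosDef) (hJ : J.IsHermitian) :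
    ∃ d, IsRelativeEigenvalues W J d := by
  obtain ⟨Q, hQ, rfl⟩ := posDef_iff_exists_isUnit_conjTranspose_mul_self.mp hW
  have hQdet := (isUnit_iff_isUnit_det Q).mp hQ
  have hM : ((Q⁻¹)ᴴ * J * Q⁻¹).IsHermitian := isHermitian_conjTranspose_mul_mul _ hJ
  set U := hM.eigenvectorUnitary
  have hU : (U : Matrix n n 𝕜) * (U : Matrix n n 𝕜)ᴴ = 1 := Unitary.coe_mul_star_self U
  refine ⟨hM.eigenvalues, (U : Matrix n n 𝕜)ᴴ * Q, ?_, ?_, ?_⟩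
  · exact (Unitary.isUnit_coe (U := star U)).mul hQ
  · calc Qᴴ * Q = Qᴴ * (U * (U : Matrix n n 𝕜)ᴴ) * Q := by rw [hU, mul_one]
      _ = _ := by simp only [conjTranspose_mul, conjTranspose_conjTranspose, mul_assoc]
  · have hQinv : Qᴴ * (Q⁻¹)ᴴ = 1 := by
      rw [← conjTranspose_mul, nonsing_inv_mul Q hQdet, conjTranspose_one]
    calc J = (Qᴴ * (Q⁻¹)ᴴ) * J * (Q⁻¹ * Q) := by
          rw [hQinv, nonsing_inv_mul Q hQdet, one_mul, mul_one]
      _ = Qᴴ * ((Q⁻¹)ᴴ * J * Q⁻¹) * Q := by simp only [mul_assoc]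
      _ = Qᴴ * (U * diagonal (fun i ↦ (hM.eigenvalues i : 𝕜)) * (U : Matrix n n 𝕜)ᴴ) * Q := by
          congr 2
          exact hM.spectral_theorem.trans (Unitary.conjStarAlgAut_apply ..)
      _ = _ := by simp only [conjTranspose_mul, conjTranspose_conjTranspose, mul_assoc]

theorem smul_add_smul_conj_diagonal (P : Matrix n n 𝕜) (d : n → ℝ) (a b : ℝ) :
    a • (Pᴴ * P) + b • (Pᴴ * diagonal (fun i ↦ (d i : 𝕜)) * P) =
      Pᴴ * diagonal (fun i ↦ ((a + b * d i : ℝ) : 𝕜)) * P := by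
  have hdiag : diagonal (fun i ↦ ((a + b * d i : ℝ) : 𝕜)) =
      a • (1 : Matrix n n 𝕜) + b • diagonal (fun i ↦ (d i : 𝕜)) := by
    ext i j
    by_cases hij : i = j <;> simp [hij, RCLike.real_smul_eq_coe_mul]
  rw [hdiag, mul_add, add_mul, mul_smul_comm, smul_mul_assoc, mul_one, mul_smul_comm,
    smul_mul_assoc]

namespace IsRelativeEigenvalues

variable {W J : Matrix n n 𝕜} {d : n → ℝ}

theorem posSemidef_smul_add_smul_iff (h : IsRelativeEigenvalues W J d) (a b : ℝ) :
    (a • W + b • J).PosSemidef ↔ ∀ i, 0 ≤ a + b * d i := by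
  obtain ⟨P, hP, rfl, rfl⟩ := h
  rw [smul_add_smul_conj_diagonal, ← star_eq_conjTranspose, hP.posSemidef_star_left_conjugate_iff,
    posSemidef_diagonal_iff]
  simp only [RCLike.ofReal_nonneg]

theorem posSemidef_add_iff (h : IsRelativeEigenvalues W J d) :
    (W + J).PosSemidef ↔ ∀ i, -1 ≤ d i := by
  have hiff := h.posSemidef_smul_add_smul_iff 1 1
  simpa only [one_smul, one_mul, ← neg_le_iff_add_nonneg'] using hiff

theorem posSemidef_sub_iff (h : IsRelativeEigenvalues W J d) :
    (W - J).PosSemidef ↔ ∀ i, d i ≤ 1 := by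
  have hiff := h.posSemidef_smul_add_smul_iff 1 (-1)
  simpa only [one_smul, neg_smul, neg_one_mul, ← sub_eq_add_neg, sub_nonneg] using hiff

theorem det_smul_add (h : IsRelativeEigenvalues W J d) (t : ℝ) :
    (t • W + J).det = W.det * ((∏ i, (t + d i) : ℝ) : 𝕜) := by
  obtain ⟨P, -, rfl, rfl⟩ := h
  have hconj := smul_add_smul_conj_diagonal P d t 1
  simp only [one_smul, one_mul] at hconj
  rw [hconj, det_mul, det_mul, det_mul, det_diagonal, RCLike.ofReal_prod]
  ring

theorem prod_le_one (h : IsRelativeEigenvalues W J d) (hadd : (W + J).PosSemidef)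
    (hsub : (W - J).PosSemidef) : ∏ i, d i ≤ 1 :=
  calc ∏ i, d i ≤ |∏ i, d i| := le_abs_self _
    _ = ∏ i, |d i| := Finset.abs_prod ..
    _ ≤ 1 := Finset.prod_le_one (fun _ _ ↦ abs_nonneg _) fun i _ ↦
      abs_le.mpr ⟨h.posSemidef_add_iff.mp hadd i, h.posSemidef_sub_iff.mp hsub i⟩

end IsRelativeEigenvalues

theorem posDef_of_posSemidef_add_of_posSemidef_sub {W J : Matrix n n 𝕜} (hJ : IsUnit J)
    (hadd : (W + J).PosSemidef) (hsub : (W - J).PosSemidef) : W.PosDef := by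
  have hW : W.PosSemidef := by
    have hhalf : W = (2⁻¹ : ℝ) • ((W + J) + (W - J)) := by module
    rw [hhalf]
    exact (hadd.add hsub).smul (by norm_num)
  rw [hW.posDef_iff_isUnit, ← mulVec_injective_iff_isUnit]
  refine (injective_iff_map_eq_zero W.mulVecLin).mpr fun x (hx : W *ᵥ x = 0) ↦ ?_
  have hadd_nonneg := hadd.dotProduct_mulVec_nonneg x
  have hsub_nonneg := hsub.dotProduct_mulVec_nonneg x
  rw [add_mulVec, hx, zero_add] at hadd_nonneg
  rw [sub_mulVec, hx, zero_sub, dotProduct_neg, neg_nonneg] at hsub_nonneg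
  have hJx : J *ᵥ x = 0 := by
    have hker := hadd.dotProduct_mulVec_zero_iff x
    rw [add_mulVec, hx, zero_add] at hker
    exact hker.mp (le_antisymm hsub_nonneg hadd_nonneg)
  exact mulVec_injective_of_isUnit hJ (hJx.trans (mulVec_zero J).symm)

end RelativeEigenvalues

section Complexification

variable {n : Type*}

theorem conjTranspose_cplx (M : Matrix n n ℝ) : (cplx M)ᴴ = cplx Mᵀ := by
  ext i j
  simp [cplx]

theorem cplx_neg (M : Matrix n n ℝ) : cplx (-M) = -cplx M :=
  Matrix.map_neg Complex.ofReal Complex.ofReal_neg M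

theorem isHermitian_cplx_iff {M : Matrix n n ℝ} : (cplx M).IsHermitian ↔ M.IsSymm := by
  rw [IsHermitian, conjTranspose_cplx]
  exact (map_injective Complex.ofReal_injective).eq_iff

theorem isHermitian_I_smul_cplx {K : Matrix n n ℝ} (hK : Kᵀ = -K) :
    (Complex.I • cplx K).IsHermitian := by
  rw [IsHermitian, conjTranspose_smul, conjTranspose_cplx, hK, cplx_neg, Complex.star_def,
    Complex.conj_I, smul_neg, neg_smul, neg_neg]

theorem cplx_mul [Fintype n] (M N : Matrix n n ℝ) : cplx (M * N) = cplx M * cplx N :=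
  Matrix.map_mul (f := Complex.ofRealHom)

theorem det_cplx [Fintype n] [DecidableEq n] (M : Matrix n n ℝ) :
    (cplx M).det = (M.det : ℂ) :=
  (RingHom.map_det Complex.ofRealHom M).symm

theorem isUnit_cplx [Fintype n] [DecidableEq n] {M : Matrix n n ℝ} (hM : IsUnit M) :
    IsUnit (cplx M) :=
  hM.map Complex.ofRealHom.mapMatrix

theorem posDef_cplx_iff [Finite n] {M : Matrix n n ℝ} : (cplx M).PosDef ↔ M.PosDef := by
  classical
  cases nonempty_fintype n
  refine ⟨fun h ↦ .of_dotProduct_mulVec_pos ?_ fun x hx ↦ ?_, fun h ↦ ?_⟩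
  · rw [IsHermitian, conjTranspose_eq_transpose_of_trivial]
    exact isHermitian_cplx_iff.mp h.isHermitian
  · have hform : star (Complex.ofReal ∘ x) ⬝ᵥ cplx M *ᵥ (Complex.ofReal ∘ x) =
        ((star x ⬝ᵥ M *ᵥ x : ℝ) : ℂ) := by
      simp [dotProduct, mulVec, cplx]
    have hx' : Complex.ofReal ∘ x ≠ 0 := fun h0 ↦
      hx (funext fun i ↦ Complex.ofReal_eq_zero.mp (congrFun h0 i))
    exact Complex.zero_lt_real.mp (hform ▸ h.dotProduct_mulVec_pos hx')
  · obtain ⟨P, hP, rfl⟩ := posDef_iff_exists_isUnit_conjTranspose_mul_self.mp h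
    refine posDef_iff_exists_isUnit_conjTranspose_mul_self.mpr ⟨cplx P, isUnit_cplx hP, ?_⟩
    rw [cplx_mul, conjTranspose_cplx, conjTranspose_eq_transpose_of_trivial]

theorem posSemidef_cplx_sub_I_smul_cplx {V K : Matrix n n ℝ} (hV : V.IsSymm) (hK : Kᵀ = -K)
    (h : (cplx V + Complex.I • cplx K).PosSemidef) :
    (cplx V - Complex.I • cplx K).PosSemidef := by
  have htranspose : (cplx V + Complex.I • cplx K)ᵀ = cplx V - Complex.I • cplx K := by
    change cplx Vᵀ + Complex.I • cplx Kᵀ = _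
    rw [hV, hK, cplx_neg, smul_neg, sub_eq_add_neg]
  exact htranspose ▸ h.transpose

theorem posDef_of_posSemidef_cplx_add_I_smul_cplx [Fintype n] [DecidableEq n] {V K : Matrix n n ℝ}
    (hV : V.IsSymm) (hK : Kᵀ = -K) (hKunit : IsUnit K)
    (h : (cplx V + Complex.I • cplx K).PosSemidef) : V.PosDef := by
  have hIK : IsUnit (Complex.I • cplx K) :=
    (isUnit_cplx hKunit).smul (Units.mk0 Complex.I Complex.I_ne_zero)
  exact posDef_cplx_iff.mp <| posDef_of_posSemidef_add_of_posSemidef_sub hIK h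
    (posSemidef_cplx_sub_I_smul_cplx hV hK h)

end Complexification

theorem det_fromBlocks_fin_two {R : Type*} [CommRing R] (A B C D : Matrix (Fin 2) (Fin 2) R) :
    (fromBlocks A B C D).det =
      A.det * D.det + B.det * C.det - (A.adjugate * B * D.adjugate * C).trace := by
  have hreindex : (fromBlocks A B C D).submatrix finSumFinEquiv.symm finSumFinEquiv.symm =
      !![A 0 0, A 0 1, B 0 0, B 0 1;
         A 1 0, A 1 1, B 1 0, B 1 1;
         C 0 0, C 0 1, D 0 0, D 0 1;
         C 1 0, C 1 1, D 1 0, D 1 1] := by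
    ext i j
    fin_cases i <;> fin_cases j <;> rfl
  rw [← det_submatrix_equiv_self finSumFinEquiv.symm, hreindex, det_succ_row_zero]
  simp [det_fin_three, det_fin_two, adjugate_fin_two, trace_fin_two,
    Fin.sum_univ_four, Matrix.mul_apply, Fin.sum_univ_two, Fin.succAbove, -cons_mul]
  ring

theorem det_fromBlocks_add_symplectic {R : Type*} [CommRing R]
    {A B : Matrix (Fin 2) (Fin 2) R} (hA : A.IsSymm) (hB : B.IsSymm)
    (C : Matrix (Fin 2) (Fin 2) R) (s : R) :
    (fromBlocks (A + !![0, s; -s, 0]) C Cᵀ (B + !![0, s; -s, 0])).det =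
      (fromBlocks A C Cᵀ B).det + s ^ 2 * (A.det + B.det + 2 * C.det) + s ^ 4 := by
  rw [det_fromBlocks_fin_two, det_fromBlocks_fin_two]
  simp only [det_fin_two, adjugate_fin_two, trace_fin_two, Matrix.mul_apply, Fin.sum_univ_two,
    Matrix.add_apply, transpose_apply, of_apply, cons_val', cons_val_zero, cons_val_one,
    cons_val_fin_one, hA.apply 0 1, hB.apply 0 1]
  ring

theorem transpose_Omega2mode : Omega2modeᵀ = -Omega2mode := by
  have homega : omega2ᵀ = -omega2 := by
    ext i j
    fin_cases i <;> fin_cases j <;> simp [omega2]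
  rw [Omega2mode, fromBlocks_transpose, fromBlocks_neg, homega, transpose_zero, neg_zero]

theorem isUnit_Omega2mode : IsUnit Omega2mode := by
  rw [isUnit_iff_isUnit_det, Omega2mode, det_fromBlocks_zero₂₁, omega2, det_fin_two_of]
  norm_num

theorem quartic_pos {D Δ t : ℝ} (hD : 1 ≤ D) (hΔ : Δ ≤ 1 + D) (ht : 1 < t) :
    0 < t ^ 4 * D - t ^ 2 * Δ + 1 := by
  have ht2 : 1 < t ^ 2 := one_lt_pow₀ ht two_ne_zero
  have hDt2 : 1 < D * t ^ 2 := one_lt_mul_of_le_of_lt hD ht2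
  calc 0 < (t ^ 2 - 1) * (D * t ^ 2 - 1) := mul_pos (sub_pos.mpr ht2) (sub_pos.mpr hDt2)
    _ = t ^ 4 * D - t ^ 2 * (1 + D) + 1 := by ring
    _ ≤ t ^ 4 * D - t ^ 2 * Δ + 1 := by gcongr

section TwoMode

variable {A B C : Matrix (Fin 2) (Fin 2) ℝ}

theorem det_smul_cplx_add_I_smul_Omega2mode (hA : A.IsSymm) (hB : B.IsSymm) (t : ℝ) :
    (t • cplx (fromBlocks A C Cᵀ B) + Complex.I • cplx Omega2mode).det =
      ((t ^ 4 * (fromBlocks A C Cᵀ B).det - t ^ 2 * (A.det + B.det + 2 * C.det) + 1 : ℝ) : ℂ) := by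
  have hblocks : t • cplx (fromBlocks A C Cᵀ B) + Complex.I • cplx Omega2mode =
      fromBlocks (cplx (t • A) + !![0, Complex.I; -Complex.I, 0]) (cplx (t • C)) (cplx (t • C))ᵀ
        (cplx (t • B) + !![0, Complex.I; -Complex.I, 0]) := by
    ext i j
    rcases i with i | i <;> rcases j with j | j <;> fin_cases i <;> fin_cases j <;>
      simp [cplx, Omega2mode, omega2]
  have hV : fromBlocks (cplx (t • A)) (cplx (t • C)) (cplx (t • C))ᵀ (cplx (t • B)) =
      cplx (t • fromBlocks A C Cᵀ B) := by
    rw [fromBlocks_smul]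
    exact (fromBlocks_map ..).symm
  have hsymm {M : Matrix (Fin 2) (Fin 2) ℝ} (hM : M.IsSymm) : (cplx (t • M)).IsSymm :=
    (hM.smul t).map _
  rw [hblocks, det_fromBlocks_add_symplectic (hsymm hA) (hsymm hB), hV, Complex.I_sq,
    Complex.I_pow_four]
  simp only [det_cplx, det_smul, Fintype.card_sum, Fintype.card_fin]
  push_cast
  ring

theorem det_mul_prod_relativeEigenvalues (hA : A.IsSymm) (hB : B.IsSymm) {d : Fin 2 ⊕ Fin 2 → ℝ}
    (hd : IsRelativeEigenvalues (cplx (fromBlocks A C Cᵀ B)) (Complex.I • cplx Omega2mode) d)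
    (t : ℝ) :
    (fromBlocks A C Cᵀ B).det * ∏ i, (t + d i) =
      t ^ 4 * (fromBlocks A C Cᵀ B).det - t ^ 2 * (A.det + B.det + 2 * C.det) + 1 := by
  have hdet := hd.det_smul_add t
  rw [det_smul_cplx_add_I_smul_Omega2mode hA hB, det_cplx] at hdet
  exact Complex.ofReal_injective ((Complex.ofReal_mul ..).trans hdet.symm)

theorem one_le_det_of_posSemidef (hA : A.IsSymm) (hB : B.IsSymm)
    (hV : (fromBlocks A C Cᵀ B).PosDef)
    (h : (cplx (fromBlocks A C Cᵀ B) + Complex.I • cplx Omega2mode).PosSemidef) :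
    1 ≤ (fromBlocks A C Cᵀ B).det := by
  obtain ⟨d, hd⟩ := exists_isRelativeEigenvalues (posDef_cplx_iff.mpr hV)
    (isHermitian_I_smul_cplx transpose_Omega2mode)
  have hprod_le : ∏ i, d i ≤ 1 :=
    hd.prod_le_one h (posSemidef_cplx_sub_I_smul_cplx (hA.fromBlocks rfl hB) transpose_Omega2mode h)
  have hprod : (fromBlocks A C Cᵀ B).det * ∏ i, d i = 1 := by
    simpa using det_mul_prod_relativeEigenvalues hA hB hd 0
  exact hprod ▸ mul_le_of_le_one_right hV.det_pos.le hprod_le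

theorem invariant_le_one_add_det_of_posSemidef (hA : A.IsSymm) (hB : B.IsSymm)
    (h : (cplx (fromBlocks A C Cᵀ B) + Complex.I • cplx Omega2mode).PosSemidef) :
    A.det + B.det + 2 * C.det ≤ 1 + (fromBlocks A C Cᵀ B).det := by
  have hdet := det_smul_cplx_add_I_smul_Omega2mode (C := C) hA hB 1
  rw [one_smul] at hdet
  have hnonneg := Complex.zero_le_real.mp (hdet ▸ h.det_nonneg)
  linarith

theorem posSemidef_of_one_le_det_of_invariant_le (hA : A.IsSymm) (hB : B.IsSymm)
    (hV : (fromBlocks A C Cᵀ B).PosDef) (hdet : 1 ≤ (fromBlocks A C Cᵀ B).det)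
    (hinv : A.det + B.det + 2 * C.det ≤ 1 + (fromBlocks A C Cᵀ B).det) :
    (cplx (fromBlocks A C Cᵀ B) + Complex.I • cplx Omega2mode).PosSemidef := by
  obtain ⟨d, hd⟩ := exists_isRelativeEigenvalues (posDef_cplx_iff.mpr hV)
    (isHermitian_I_smul_cplx transpose_Omega2mode)
  refine hd.posSemidef_add_iff.mpr fun i ↦ ?_
  by_contra! hneg
  have hroot : (fromBlocks A C Cᵀ B).det * ∏ j, (-d i + d j) = 0 := by
    rw [Finset.prod_eq_zero (Finset.mem_univ i) (neg_add_cancel (d i)), mul_zero]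
  rw [det_mul_prod_relativeEigenvalues hA hB hd] at hroot
  exact (quartic_pos hdet hinv (lt_neg_of_lt_neg hneg)).ne' hroot

end TwoMode

/-- Global-invariant genuineness criterion: V satisfies V + iΩ ≥ 0 iff V > 0,
det V ≥ 1 and Δ(V) ≤ 1 + det V, where Δ(V) = det A + det B + 2 det C. -/
theorem genuineness_global_invariants (A B C : Matrix (Fin 2) (Fin 2) ℝ)
    (hA : Aᵀ = A) (hB : Bᵀ = B) :
    (cplx (Matrix.fromBlocks A C Cᵀ B) + Complex.I • cplx Omega2mode).PosSemidef
      ↔ ((Matrix.fromBlocks A C Cᵀ B).PosDef ∧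
         1 ≤ (Matrix.fromBlocks A C Cᵀ B).det ∧
         A.det + B.det + 2 * C.det ≤ 1 + (Matrix.fromBlocks A C Cᵀ B).det) := by
  refine ⟨fun h ↦ ?_, fun ⟨hV, hdet, hinv⟩ ↦
    posSemidef_of_one_le_det_of_invariant_le hA hB hV hdet hinv⟩
  have hsymm : (fromBlocks A C Cᵀ B).IsSymm := .fromBlocks hA rfl hB
  have hV : (fromBlocks A C Cᵀ B).PosDef :=
    posDef_of_posSemidef_cplx_add_I_smul_cplx hsymm transpose_Omega2mode isUnit_Omega2mode h
  exact ⟨hV, one_le_det_of_posSemidef hA hB hV h, invariant_le_one_add_det_of_posSemidef hA hB h⟩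
end

section
/- Williamson's theorem: for every 2n×2n real positive definite matrix V, there exists a real symplectic matrix S (SΩS^T = Ω) such that SVS^T = diag(ν₁,ν₁,…,ν_n,ν_n) with all ν_k > 0. -/
open Matrix

/-- The standard symplectic form Ω = ⊕ₖ ω on 2n dimensions, indexed by `Fin n × Fin 2`. -/
def OmegaStd (n : ℕ) : Matrix (Fin n × Fin 2) (Fin n × Fin 2) ℝ :=
  Matrix.of fun p q => if p.1 = q.1 then omega2 p.2 q.2 else 0

/-!
As `V` is positive definite, `T * V * Tᵀ = 1` for some invertible `T`. Then `X = T * Ω * Tᵀ` is an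
invertible skew-symmetric matrix, so an orthogonal `R` brings it to the block form `⊕ l k • ω` with
`l k > 0`. Rescaling the `k`-th pair of coordinates by `1 / √(l k)` turns this block form into `Ω`
and the identity `R * (T * V * Tᵀ) * Rᵀ` into the diagonal matrix with entries `ν k = 1 / l k`.

The block form is found one plane at a time: if `A` is skew-adjoint and `u` is an eigenvector of the
symmetric operator `A²`, then the span of `u` and `A u` is invariant under `A`, hence so is its
orthogonal complement.
-/

open scoped Kronecker InnerProductSpace

theorem orthonormal_uncurry_cons {𝕜 F κ : Type*} [RCLike 𝕜] [NormedAddCommGroup F]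
    [InnerProductSpace 𝕜 F] {n : ℕ} {b : κ → F} {e : Fin n → κ → F} (hb : Orthonormal 𝕜 b)
    (he : Orthonormal 𝕜 (Function.uncurry e)) (hbe : ∀ i k j, ⟪b i, e k j⟫_𝕜 = 0) :
    Orthonormal 𝕜 (Function.uncurry (Fin.cons b e : Fin (n + 1) → κ → F)) := by
  classical
  rw [orthonormal_iff_ite] at *
  rintro ⟨k, i⟩ ⟨m, j⟩
  cases k using Fin.cases with
  | zero =>
    cases m using Fin.cases with
    | zero => simpa using hb i j
    | succ m => simpa [(Fin.succ_ne_zero m).symm] using hbe i m j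
  | succ k =>
    cases m using Fin.cases with
    | zero => simpa [Fin.succ_ne_zero] using inner_eq_zero_symm.1 (hbe j k i)
    | succ m => simpa using he (k, i) (m, j)

section SkewAdjoint

open Module.End (invtSubmodule)

variable {E : Type*} [NormedAddCommGroup E] [InnerProductSpace ℝ E] {A : E →ₗ[ℝ] E}

theorem inner_map_left_of_isSkewAdjoint (hA : (innerₗ E).IsSkewAdjoint A) (x y : E) :
    ⟪A x, y⟫_ℝ = -⟪x, A y⟫_ℝ :=
  (hA x y).trans (inner_neg_right x (A y))

theorem inner_self_map_eq_zero_of_isSkewAdjoint (hA : (innerₗ E).IsSkewAdjoint A) (x : E) :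
    ⟪x, A x⟫_ℝ = 0 := by
  linarith [inner_map_left_of_isSkewAdjoint hA x x, real_inner_comm x (A x)]

theorem isSymmetric_comp_self_of_isSkewAdjoint (hA : (innerₗ E).IsSkewAdjoint A) :
    (A ∘ₗ A).IsSymmetric := fun x y => by
  simp [inner_map_left_of_isSkewAdjoint hA]

theorem orthogonal_mem_invtSubmodule_of_isSkewAdjoint (hA : (innerₗ E).IsSkewAdjoint A)
    {K : Submodule ℝ E} (hK : K ∈ invtSubmodule A) : Kᗮ ∈ invtSubmodule A := fun x hx y hy => by
  rw [← neg_eq_zero, ← inner_map_left_of_isSkewAdjoint hA]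
  exact hx (A y) (hK hy)

/-- `A` acts on the pair of vectors `b` by the matrix `l • omega2`, i.e.
`A (b j) = ∑ i, l * omega2 i j • b i`. For an orthonormal pair and `l > 0`, this is one
two-dimensional block of the normal form of a skew-adjoint operator. -/
structure IsSkewBlock (A : E →ₗ[ℝ] E) (l : ℝ) (b : Fin 2 → E) : Prop where
  map_zero : A (b 0) = -l • b 1
  map_one : A (b 1) = l • b 0

theorem IsSkewBlock.span_mem_invtSubmodule {l : ℝ} {b : Fin 2 → E} (h : IsSkewBlock A l b) :
    Submodule.span ℝ (Set.range b) ∈ invtSubmodule A := by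
  have hb (i) : b i ∈ Submodule.span ℝ (Set.range b) := Submodule.subset_span ⟨i, rfl⟩
  rw [Module.End.mem_invtSubmodule, Submodule.span_le, Set.range_subset_iff, Fin.forall_fin_two]
  constructor
  · simpa only [SetLike.mem_coe, Submodule.mem_comap, h.map_zero]
      using Submodule.smul_mem _ _ (hb 1)
  · simpa only [SetLike.mem_coe, Submodule.mem_comap, h.map_one]
      using Submodule.smul_mem _ _ (hb 0)

theorem toMatrix_eq_diagonal_kronecker_omega2 {ι : Type*} [Fintype ι] [DecidableEq ι]
    {b : OrthonormalBasis (ι × Fin 2) ℝ E} {l : ι → ℝ}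
    (h : ∀ k, IsSkewBlock A (l k) fun i => b (k, i)) :
    LinearMap.toMatrix b.toBasis b.toBasis A = diagonal l ⊗ₖ omega2 := by
  ext ⟨k, i⟩ ⟨m, j⟩
  have hinner (i j : Fin 2) := orthonormal_iff_ite.1 b.orthonormal (k, i) (m, j)
  rw [LinearMap.toMatrix_apply, b.coe_toBasis, b.coe_toBasis_repr_apply, b.repr_apply_apply,
    kroneckerMap_apply, diagonal_apply]
  rcases eq_or_ne k m with rfl | hkm
  · fin_cases i <;> fin_cases j <;>
      simp [(h k).map_zero, (h k).map_one, inner_smul_right, hinner, omega2]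
  · fin_cases j <;> simp [(h m).map_zero, (h m).map_one, inner_smul_right, hinner, hkm]

theorem exists_orthonormal_isSkewBlock [FiniteDimensional ℝ E] [Nontrivial E]
    (hA : (innerₗ E).IsSkewAdjoint A) (hinj : Function.Injective A) :
    ∃ (l : ℝ) (b : Fin 2 → E), 0 < l ∧ Orthonormal ℝ b ∧ IsSkewBlock A l b := by
  have hsymm := isSymmetric_comp_self_of_isSkewAdjoint hA
  let i : Fin (Module.finrank ℝ E) := ⟨0, Module.finrank_pos⟩
  obtain ⟨u, μ, hu, hAAu⟩ : ∃ (u : E) (μ : ℝ), ‖u‖ = 1 ∧ A (A u) = μ • u :=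
    ⟨hsymm.eigenvectorBasis rfl i, hsymm.eigenvalues rfl i,
      (hsymm.eigenvectorBasis rfl).orthonormal.1 i, hsymm.apply_eigenvectorBasis rfl i⟩
  have hAu : 0 < ‖A u‖ := norm_pos_iff.2 <| (map_ne_zero_iff A hinj).2 <| by
    rintro rfl; simp at hu
  have hμ : μ = -‖A u‖ ^ 2 := by
    have h := inner_map_left_of_isSkewAdjoint hA (A u) u
    rwa [hAAu, real_inner_smul_left, real_inner_self_eq_norm_sq, real_inner_self_eq_norm_sq, hu,
      one_pow, mul_one] at h
  refine ⟨‖A u‖, ![u, -‖A u‖⁻¹ • A u], hAu, ?_, ⟨?_, ?_⟩⟩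
  · have huv : ⟪u, A u⟫_ℝ = 0 := inner_self_map_eq_zero_of_isSkewAdjoint hA u
    simp [orthonormal_vecCons_iff, hu, huv, inner_smul_right, norm_smul, hAu.ne']
  · simp [smul_smul, hAu.ne']
  · have : -‖A u‖⁻¹ * μ = ‖A u‖ := by rw [hμ]; field_simp
    simp only [cons_val_zero, cons_val_one, map_smul, hAAu, smul_smul, this]

theorem exists_orthonormal_uncurry_isSkewBlock [FiniteDimensional ℝ E]
    (hA : (innerₗ E).IsSkewAdjoint A) (hinj : Function.Injective A) {n : ℕ}
    (hn : Module.finrank ℝ E = 2 * n) :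
    ∃ (e : Fin n → Fin 2 → E) (l : Fin n → ℝ), Orthonormal ℝ (Function.uncurry e) ∧
      (∀ k, 0 < l k) ∧ ∀ k, IsSkewBlock A (l k) (e k) := by
  induction n generalizing E with
  | zero => exact ⟨Fin.elim0, Fin.elim0, ⟨fun p => p.1.elim0, fun p => p.1.elim0⟩,
      fun k => k.elim0, fun k => k.elim0⟩
  | succ n ih =>
    have : Nontrivial E := Module.nontrivial_of_finrank_pos (R := ℝ) (by omega)
    obtain ⟨l₀, b, hl₀, hb, hAb⟩ := exists_orthonormal_isSkewBlock hA hinj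
    let K := Submodule.span ℝ (Set.range b)
    have hK : Module.finrank ℝ Kᗮ = 2 * n := by
      have hK₂ : Module.finrank ℝ K = 2 := by
        simpa using finrank_span_eq_card hb.linearIndependent
      have := K.finrank_add_finrank_orthogonal
      omega
    have hAK : ∀ x ∈ Kᗮ, A x ∈ Kᗮ :=
      orthogonal_mem_invtSubmodule_of_isSkewAdjoint hA hAb.span_mem_invtSubmodule
    obtain ⟨e, l, he, hl, hAe⟩ := ih (A := A.restrict hAK) (fun x y => hA x y)
      (fun x y hxy => Subtype.ext (hinj (congrArg Subtype.val hxy))) hK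
    refine ⟨Fin.cons b fun k i => (e k i : E), Fin.cons l₀ l, ?_, ?_, ?_⟩
    · exact orthonormal_uncurry_cons hb (he.comp_linearIsometry Kᗮ.subtypeₗᵢ) fun i k j =>
        (e k j).2 (b i) (Submodule.subset_span ⟨i, rfl⟩)
    · exact Fin.forall_fin_succ.2 ⟨hl₀, hl⟩
    · exact Fin.forall_fin_succ.2 ⟨hAb, fun k =>
        ⟨congrArg Subtype.val (hAe k).map_zero, congrArg Subtype.val (hAe k).map_one⟩⟩

theorem exists_orthonormalBasis_toMatrix_eq_diagonal_kronecker_omega2 [FiniteDimensional ℝ E]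
    (hA : (innerₗ E).IsSkewAdjoint A) (hinj : Function.Injective A) {n : ℕ}
    (hn : Module.finrank ℝ E = 2 * n) :
    ∃ (b : OrthonormalBasis (Fin n × Fin 2) ℝ E) (l : Fin n → ℝ), (∀ k, 0 < l k) ∧
      LinearMap.toMatrix b.toBasis b.toBasis A = diagonal l ⊗ₖ omega2 := by
  obtain ⟨e, l, he, hl, hAe⟩ := exists_orthonormal_uncurry_isSkewBlock hA hinj hn
  have hspan : ⊤ ≤ Submodule.span ℝ (Set.range (Function.uncurry e)) :=
    (he.linearIndependent.span_eq_top_of_card_eq_finrank' (by simp [hn, mul_comm])).ge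
  refine ⟨OrthonormalBasis.mk he hspan, l, hl, toMatrix_eq_diagonal_kronecker_omega2 fun k => ?_⟩
  simpa only [OrthonormalBasis.coe_mk, Function.uncurry_apply_pair] using hAe k

end SkewAdjoint

section Matrix

variable {m : Type*} [Fintype m] [DecidableEq m]

theorem isSkewAdjoint_toEuclideanLin {X : Matrix m m ℝ} (hX : Xᵀ = -X) :
    (innerₗ (EuclideanSpace ℝ m)).IsSkewAdjoint (toEuclideanLin X) := fun x y => by
  have h := LinearMap.adjoint_inner_right (toEuclideanLin X) x y
  rw [← toEuclideanLin_conjTranspose_eq_adjoint, conjTranspose_eq_transpose_of_trivial, hX,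
    map_neg] at h
  exact h.symm

theorem exists_mul_mul_transpose_eq_diagonal_kronecker_omega2 {X : Matrix m m ℝ} (hX : Xᵀ = -X)
    (hXu : IsUnit X) {n : ℕ} (hn : Fintype.card m = 2 * n) :
    ∃ (R : Matrix (Fin n × Fin 2) m ℝ) (l : Fin n → ℝ), (∀ k, 0 < l k) ∧
      R * Rᵀ = 1 ∧ R * X * Rᵀ = diagonal l ⊗ₖ omega2 := by
  have hinj : Function.Injective (toEuclideanLin X) := fun x y h =>
    WithLp.ofLp_injective 2 (mulVec_injective_of_isUnit hXu (congrArg WithLp.ofLp h))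
  obtain ⟨b, l, hl, hb⟩ := exists_orthonormalBasis_toMatrix_eq_diagonal_kronecker_omega2
    (isSkewAdjoint_toEuclideanLin hX) hinj (by simpa using hn)
  let c := EuclideanSpace.basisFun m ℝ
  have hRt : (b.toBasis.toMatrix c.toBasis)ᵀ = c.toBasis.toMatrix b.toBasis := by
    ext i p
    simp [Module.Basis.toMatrix_apply, b.repr_apply_apply, c, EuclideanSpace.inner_single_right]
  refine ⟨b.toBasis.toMatrix c.toBasis, l, hl, ?_, ?_⟩
  · rw [hRt, Module.Basis.toMatrix_mul_toMatrix_flip]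
  · rw [hRt, ← hb, ← basis_toMatrix_mul_linearMap_toMatrix_mul_basis_toMatrix b.toBasis c.toBasis
      b.toBasis c.toBasis, toEuclideanLin_eq_toLin_orthonormal, LinearMap.toMatrix_toLin]

open scoped MatrixOrder ComplexOrder in
theorem exists_isUnit_mul_mul_conjTranspose_eq_one {𝕜 : Type*} [RCLike 𝕜] {V : Matrix m m 𝕜}
    (hV : V.PosDef) : ∃ T : Matrix m m 𝕜, IsUnit T ∧ T * V * Tᴴ = 1 := by
  obtain ⟨T, hT, hTV⟩ :=
    CStarAlgebra.isStrictlyPositive_iff_eq_star_mul_self.1 hV.inv.isStrictlyPositive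
  refine ⟨T, hT, ?_⟩
  have hTTV : Tᴴ * (T * V) = 1 := by
    rw [← Matrix.mul_assoc, ← star_eq_conjTranspose, ← hTV,
      nonsing_inv_mul V ((isUnit_iff_isUnit_det V).1 hV.isUnit)]
  exact mul_eq_one_comm.1 hTTV

theorem OmegaStd_eq_one_kronecker (n : ℕ) : OmegaStd n = 1 ⊗ₖ omega2 := by
  ext p q
  simp [OmegaStd, one_apply]

theorem transpose_OmegaStd (n : ℕ) : (OmegaStd n)ᵀ = -OmegaStd n := by
  have h : omega2ᵀ = (-1 : ℝ) • omega2 := by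
    ext i j; fin_cases i <;> fin_cases j <;> simp [omega2]
  rw [OmegaStd_eq_one_kronecker, ← kroneckerMap_transpose, transpose_one, h, kronecker_smul,
    neg_one_smul]

theorem isUnit_OmegaStd (n : ℕ) : IsUnit (OmegaStd n) := by
  simp [OmegaStd_eq_one_kronecker, isUnit_iff_isUnit_det, det_kronecker, omega2]

theorem exists_mul_diagonal_kronecker_mul_transpose_eq_one_kronecker {κ : Type*} [Fintype κ]
    [DecidableEq κ] {l : m → ℝ} (hl : ∀ k, 0 < l k) (B : Matrix κ κ ℝ) :
    ∃ D : Matrix (m × κ) (m × κ) ℝ, D * (diagonal l ⊗ₖ B) * Dᵀ = 1 ⊗ₖ B ∧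
      D * Dᵀ = diagonal fun p => (l p.1)⁻¹ := by
  have hd (k : m) : (√(l k))⁻¹ * (√(l k))⁻¹ = (l k)⁻¹ := by
    rw [← mul_inv, Real.mul_self_sqrt (hl k).le]
  have hdl (k : m) : (√(l k))⁻¹ * l k * (√(l k))⁻¹ = 1 := by
    rw [mul_right_comm, hd, inv_mul_cancel₀ (hl k).ne']
  refine ⟨diagonal (fun k => (√(l k))⁻¹) ⊗ₖ 1, ?_, ?_⟩ <;>
    rw [← kroneckerMap_transpose, diagonal_transpose, transpose_one]
  · simp only [← mul_kronecker_mul, diagonal_mul_diagonal, Matrix.one_mul, Matrix.mul_one, hdl,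
      diagonal_one]
  · simp only [← mul_kronecker_mul, diagonal_mul_diagonal, Matrix.mul_one, hd]
    simp only [← diagonal_one, diagonal_kronecker_diagonal, mul_one]

theorem williamson_general {V J : Matrix m m ℝ} (hV : V.PosDef) (hJ : Jᵀ = -J) (hJu : IsUnit J)
    {n : ℕ} (hn : Fintype.card m = 2 * n) :
    ∃ (S : Matrix (Fin n × Fin 2) m ℝ) (ν : Fin n → ℝ),
      S * J * Sᵀ = OmegaStd n ∧ (∀ k, 0 < ν k) ∧
      S * V * Sᵀ = Matrix.diagonal (fun p => ν p.1) := by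
  obtain ⟨T, hT, hTV⟩ := exists_isUnit_mul_mul_conjTranspose_eq_one hV
  rw [conjTranspose_eq_transpose_of_trivial] at hTV
  obtain ⟨R, l, hl, hR, hRX⟩ := exists_mul_mul_transpose_eq_diagonal_kronecker_omega2
    (X := T * J * Tᵀ) (by simp [hJ, Matrix.mul_assoc])
    ((hT.mul hJu).mul ((isUnit_transpose T).2 hT)) hn
  obtain ⟨D, hDl, hD⟩ :=
    exists_mul_diagonal_kronecker_mul_transpose_eq_one_kronecker hl omega2
  have hcongr (M : Matrix m m ℝ) :
      D * R * T * M * (D * R * T)ᵀ = D * (R * (T * M * Tᵀ) * Rᵀ) * Dᵀ := by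
    simp only [transpose_mul, Matrix.mul_assoc]
  refine ⟨D * R * T, fun k => (l k)⁻¹, ?_, fun k => inv_pos.2 (hl k), ?_⟩
  · rw [hcongr, hRX, hDl, OmegaStd_eq_one_kronecker]
  · rw [hcongr, hTV, Matrix.mul_one, hR, Matrix.mul_one, hD]

end Matrix

/-- Williamson's theorem: every real positive definite matrix V of even size can be
symplectically diagonalized, SVSᵀ = diag(ν₁,ν₁,…,ν_n,ν_n) with νₖ > 0. -/
theorem williamson (n : ℕ) (V : Matrix (Fin n × Fin 2) (Fin n × Fin 2) ℝ)
    (hV : V.PosDef) :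
    ∃ (S : Matrix (Fin n × Fin 2) (Fin n × Fin 2) ℝ) (ν : Fin n → ℝ),
      S * OmegaStd n * Sᵀ = OmegaStd n ∧ (∀ k, 0 < ν k) ∧
      S * V * Sᵀ = Matrix.diagonal (fun p => ν p.1) :=
  williamson_general hV (transpose_OmegaStd n) (isUnit_OmegaStd n) (by simp [mul_comm])
end
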